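/- Let φ, ψ ∈ ℂ[x,y] be homogeneous binary forms of degree d ≥ 3 with only simple zeros, and let S : φ(x,y) − ψ(z,t) = 0, L : z = t = 0, L′ : x = y = 0. For every nonzero (a,b) ∈ ℂ² with φ(a,b) = 0 and every nonzero (c,e) ∈ ℂ² with ψ(c,e) = 0, the 2-dimensional subspace spanned by (a,b,0,0) and (0,0,c,e) lies on S; these give exactly d² distinct lines, and they are precisely the lines lying on S that meet both L and L' nontrivially. -/

import Mathlib

/-!
A squarefree binary form of degree `d` has exactly `d` zeros in `ℙ¹`. Write it as the
homogenization of `p(x) = φ(x, 1)`. Squares dividing `p` homogenize to squares dividing `φ`, so `p`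
is squarefree and has `deg p` distinct roots, which are the zeros of `φ` with `y ≠ 0`. The point
`[1 : 0]` is a zero exactly when `deg p < d`, and then `deg p = d - 1`, since otherwise `y²`
would divide `φ` (`ncard_projZeros`).

As `ℂ⁴ = L ⊕ L'`, the line joining a point of `L` to a point of `L'` determines both points
(`join_injective`), so there are `d²` joining lines. On `L` the form `φ(x,y) - ψ(z,t)` restricts to
`φ`, and on `L'` to `-ψ`; hence a line on the surface that meets both `L` and `L'` meets them in
zeros of `φ` and `ψ`, and it is spanned by these two points. Conversely, on such a
span `φ(su) - ψ(tv) = s^d φ(u) - t^d ψ(v) = 0`.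
-/

open MvPolynomial

/-- A line in ℙ³: a 2-dimensional linear subspace of ℂ⁴. -/
def IsLine (W : Submodule ℂ (Fin 4 → ℂ)) : Prop :=
  Module.finrank ℂ W = 2

/-- The line `W` lies on the surface `F = 0`. -/
def LiesOn (F : MvPolynomial (Fin 4) ℂ) (W : Submodule ℂ (Fin 4 → ℂ)) : Prop :=
  ∀ v ∈ W, eval v F = 0

/-- The polynomial `φ(x,y) - ψ(z,t)` in four variables. -/
noncomputable def sepForm (φ ψ : MvPolynomial (Fin 2) ℂ) : MvPolynomial (Fin 4) ℂ :=
  rename (fun i : Fin 2 => (⟨i.val, by omega⟩ : Fin 4)) φ -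
    rename (fun i : Fin 2 => (⟨i.val + 2, by omega⟩ : Fin 4)) ψ

/-- The line `L : z = t = 0`. -/
noncomputable def lineL : Submodule ℂ (Fin 4 → ℂ) :=
  Submodule.span ℂ {![1,0,0,0], ![0,1,0,0]}

/-- The line `L' : x = y = 0`. -/
noncomputable def lineL' : Submodule ℂ (Fin 4 → ℂ) :=
  Submodule.span ℂ {![0,0,1,0], ![0,0,0,1]}

/-- The set of lines joining a zero of `φ` on `L` to a zero of `ψ` on `L'`. -/
noncomputable def joiningLines (φ ψ : MvPolynomial (Fin 2) ℂ) :
    Set (Submodule ℂ (Fin 4 → ℂ)) :=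
  {W | ∃ a b c e : ℂ, (a, b) ≠ (0, 0) ∧ (c, e) ≠ (0, 0) ∧
    eval ![a, b] φ = 0 ∧ eval ![c, e] ψ = 0 ∧
    W = Submodule.span ℂ {![a, b, 0, 0], ![0, 0, c, e]}}

/-! ### Zeros of squarefree binary forms -/

/-- The points of `ℙ¹`, viewed as one-dimensional subspaces of `ℂ²`, at which `φ` vanishes. -/
def projZeros (φ : MvPolynomial (Fin 2) ℂ) : Set (Submodule ℂ (Fin 2 → ℂ)) :=
  {U | ∃ v : Fin 2 → ℂ, v ≠ 0 ∧ eval v φ = 0 ∧ U = Submodule.span ℂ {v}}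

lemma eval_homogenize_infinity (p : Polynomial ℂ) (d : ℕ) (v : Fin 2 → ℂ) (hv : v 1 = 0) :
    eval v (p.homogenize d) = p.coeff d * v 0 ^ d := by
  rw [Polynomial.homogenize, map_sum, Finset.sum_eq_single (d, 0)]
  · rw [eval_monomial, Finsupp.prod_fintype _ _ (by simp)]
    simp
  · rintro ⟨k, l⟩ hkl hne
    rw [eval_monomial, Finsupp.prod_fintype _ _ (by simp)]
    have hl : l ≠ 0 := by
      rintro rfl
      apply hne
      simpa using hkl
    simp [hv, hl]
  · simp

lemma squarefree_of_homogenize {p : Polynomial ℂ} {d : ℕ} (hp : p.natDegree ≤ d)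
    (h : Squarefree (p.homogenize d)) : Squarefree p := by
  have hp0 : p ≠ 0 := by
    rintro rfl
    simp at h
  have h1 : p.homogenize p.natDegree ∣ p.homogenize d := by
    have := Polynomial.homogenize_mul p 1 (le_refl p.natDegree) (n := d - p.natDegree) (by simp)
    rw [mul_one, Nat.add_sub_of_le hp] at this
    exact Dvd.intro _ this.symm
  intro q hq
  have hq0 : q ≠ 0 := by
    rintro rfl
    simp at hq
    exact hp0 hq
  have h2 := Polynomial.homogenize_dvd hq
  rw [Polynomial.natDegree_mul hq0 hq0, Polynomial.homogenize_mul _ _ le_rfl le_rfl] at h2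
  have h3 := (h _ (h2.trans h1)).map (aeval ![Polynomial.X, (1 : Polynomial ℂ)])
  rwa [Polynomial.aeval_homogenize_X_one _ le_rfl] at h3

/-- A squarefree form is divisible by `y` at most once, so dehomogenizing at `y = 1` lowers the
degree by at most one. -/
lemma le_natDegree_succ_of_homogenize {p : Polynomial ℂ} {d : ℕ} (hp : p.natDegree ≤ d)
    (h : Squarefree (p.homogenize d)) : d ≤ p.natDegree + 1 := by
  by_contra! hlt
  have := Polynomial.homogenize_mul p 1 (le_refl p.natDegree) (n := d - p.natDegree) (by simp)
  rw [mul_one, Nat.add_sub_of_le hp, Polynomial.homogenize_one] at this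
  have h2 : (X 1 * X 1 : MvPolynomial (Fin 2) ℂ) ∣ p.homogenize d := by
    rw [this, ← pow_two]
    exact (pow_dvd_pow _ (by omega)).trans (dvd_mul_left _ _)
  have h3 := (h _ h2).map (eval (0 : Fin 2 → ℂ))
  simp at h3

lemma span_affine_injective :
    Function.Injective fun r : ℂ => Submodule.span ℂ {(![r, 1] : Fin 2 → ℂ)} := by
  intro r s hrs
  have : (![r, 1] : Fin 2 → ℂ) ∈ Submodule.span ℂ {(![s, 1] : Fin 2 → ℂ)} := by
    rw [← show Submodule.span ℂ {(![r, 1] : Fin 2 → ℂ)} = Submodule.span ℂ {![s, 1]} from hrs]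
    exact Submodule.mem_span_singleton_self _
  obtain ⟨c, hc⟩ := Submodule.mem_span_singleton.1 this
  have h0 := congrFun hc 0
  have h1 := congrFun hc 1
  simp at h0 h1
  simp [← h0, h1]

lemma span_infinity_ne_affine (r : ℂ) :
    Submodule.span ℂ {(![1, 0] : Fin 2 → ℂ)} ≠ Submodule.span ℂ {(![r, 1] : Fin 2 → ℂ)} := by
  intro h
  have : (![r, 1] : Fin 2 → ℂ) ∈ Submodule.span ℂ {(![1, 0] : Fin 2 → ℂ)} := by
    rw [h]
    exact Submodule.mem_span_singleton_self _
  obtain ⟨c, hc⟩ := Submodule.mem_span_singleton.1 this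
  have h1 := congrFun hc 1
  simp at h1

lemma projZeros_homogenize {p : Polynomial ℂ} {d : ℕ} (hp : p.natDegree ≤ d) (hp0 : p ≠ 0) :
    projZeros (p.homogenize d) =
      (fun r : ℂ => Submodule.span ℂ {(![r, 1] : Fin 2 → ℂ)}) '' (p.roots.toFinset : Set ℂ) ∪
        {U | p.coeff d = 0 ∧ U = Submodule.span ℂ {(![1, 0] : Fin 2 → ℂ)}} := by
  ext U
  constructor
  · rintro ⟨v, hv, hz, rfl⟩
    by_cases h1 : v 1 = 0
    · right
      rw [eval_homogenize_infinity _ _ _ h1] at hz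
      have h0 : v 0 ≠ 0 := by
        intro h0
        apply hv
        ext i
        fin_cases i <;> simp [h0, h1]
      refine ⟨by simpa [h0] using hz, ?_⟩
      have : v = v 0 • ![1, 0] := by
        ext i
        fin_cases i <;> simp [h1]
      rw [this]
      exact Submodule.span_singleton_smul_eq (IsUnit.mk0 _ h0) _
    · left
      rw [Polynomial.eval_homogenize hp _ h1] at hz
      refine ⟨v 0 / v 1, by simpa [hp0, h1] using hz, ?_⟩
      have : v = v 1 • ![v 0 / v 1, 1] := by
        ext i
        fin_cases i <;> simp [h1, mul_div_cancel₀]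
      conv_rhs => rw [this]
      exact (Submodule.span_singleton_smul_eq (IsUnit.mk0 _ h1) _).symm
  · rintro (⟨r, hr, rfl⟩ | ⟨hc, rfl⟩)
    · refine ⟨![r, 1], fun h => by simpa using congrFun h 1, ?_, rfl⟩
      rw [Polynomial.eval_homogenize hp _ (by simp)]
      simpa [hp0] using hr
    · refine ⟨![1, 0], fun h => by simpa using congrFun h 0, ?_, rfl⟩
      rw [eval_homogenize_infinity _ _ _ (by simp), hc, zero_mul]

lemma ncard_projZeros {d : ℕ} {φ : MvPolynomial (Fin 2) ℂ} (hφ : φ.IsHomogeneous d)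
    (hsq : Squarefree φ) : (projZeros φ).ncard = d := by
  obtain ⟨p, hp⟩ : ∃ p, p = aeval ![Polynomial.X, (1 : Polynomial ℂ)] φ := ⟨_, rfl⟩
  have hd : p.natDegree ≤ d := by
    rw [hp, φ.as_sum, map_sum]
    refine Polynomial.natDegree_sum_le_of_forall_le _ _ fun m hm => ?_
    have hm' : m.weight 1 = d := hφ (by simpa using hm)
    rw [aeval_monomial, Finsupp.prod_fintype _ _ (by simp)]
    have : m 0 ≤ d := by
      rw [← hm', Finsupp.weight_apply, Finsupp.sum_fintype _ _ (by simp)]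
      simp
    simp only [Fin.prod_univ_two, ← Polynomial.C_eq_algebraMap]
    simpa using (Polynomial.natDegree_C_mul_X_pow_le _ _).trans this
  have hh : p.homogenize d = φ := Polynomial.homogenize_eq_of_isHomogeneous hφ hp.symm
  subst hh
  have hp0 : p ≠ 0 := by
    rintro rfl
    simp at hsq
  have hroots : p.roots.toFinset.card = p.natDegree := by
    rw [Multiset.toFinset_card_of_nodup, IsAlgClosed.card_roots_eq_natDegree]
    exact Polynomial.nodup_roots
      (PerfectField.separable_iff_squarefree.2 (squarefree_of_homogenize hd hsq))
  have himg : ((fun r : ℂ => Submodule.span ℂ {(![r, 1] : Fin 2 → ℂ)}) ''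
      (p.roots.toFinset : Set ℂ)).ncard = p.natDegree := by
    rw [Set.ncard_image_of_injective _ span_affine_injective, Set.ncard_coe_finset, hroots]
  have hle := le_natDegree_succ_of_homogenize hd hsq
  rw [projZeros_homogenize hd hp0]
  by_cases hdeg : p.natDegree = d
  · have hc : p.coeff d ≠ 0 := by
      rw [← hdeg]
      simpa using hp0
    simp only [hc, false_and, Set.ofPred_false, Set.union_empty]
    rw [himg, hdeg]
  · have hc : p.coeff d = 0 := Polynomial.coeff_eq_zero_of_natDegree_lt (by omega)
    simp only [hc, true_and, Set.ofPred_eq_eq_singleton, Set.union_singleton]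
    rw [Set.ncard_insert_of_notMem, himg]
    · omega
    · rintro ⟨r, -, hr⟩
      exact span_infinity_ne_affine r hr.symm

/-! ### Lines joining `L` to `L'` -/

/-- The inclusion of `ℂ²` in `ℂ⁴` as the line `L`. -/
def incl : (Fin 2 → ℂ) →ₗ[ℂ] (Fin 4 → ℂ) where
  toFun v := ![v 0, v 1, 0, 0]
  map_add' v w := by ext i; fin_cases i <;> simp
  map_smul' c v := by ext i; fin_cases i <;> simp

/-- The inclusion of `ℂ²` in `ℂ⁴` as the line `L'`. -/
def incl' : (Fin 2 → ℂ) →ₗ[ℂ] (Fin 4 → ℂ) where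
  toFun v := ![0, 0, v 0, v 1]
  map_add' v w := by ext i; fin_cases i <;> simp
  map_smul' c v := by ext i; fin_cases i <;> simp

lemma incl_add_incl'_inj {u v u' v' : Fin 2 → ℂ} (h : incl u + incl' v = incl u' + incl' v') :
    u = u' ∧ v = v' := by
  have h0 := congrFun h 0
  have h1 := congrFun h 1
  have h2 := congrFun h 2
  have h3 := congrFun h 3
  simp [incl, incl'] at h0 h1 h2 h3
  constructor <;> ext i <;> fin_cases i <;> simp [*]

lemma mem_map_sup_map {U V : Submodule ℂ (Fin 2 → ℂ)} {u v : Fin 2 → ℂ} :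
    incl u + incl' v ∈ U.map incl ⊔ V.map incl' ↔ u ∈ U ∧ v ∈ V := by
  rw [Submodule.mem_sup]
  constructor
  · rintro ⟨_, ⟨u', hu', rfl⟩, _, ⟨v', hv', rfl⟩, h⟩
    obtain ⟨rfl, rfl⟩ := incl_add_incl'_inj h
    exact ⟨hu', hv'⟩
  · rintro ⟨hu, hv⟩
    exact ⟨_, ⟨u, hu, rfl⟩, _, ⟨v, hv, rfl⟩, rfl⟩

/-- Joining a point of `L` to a point of `L'` loses no information: `L` and `L'` are skew, so the
joining line determines the point in which it meets each of them. -/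
lemma join_injective : Function.Injective
    fun UV : Submodule ℂ (Fin 2 → ℂ) × Submodule ℂ (Fin 2 → ℂ) =>
      UV.1.map incl ⊔ UV.2.map incl' := by
  rintro ⟨U, V⟩ ⟨U', V'⟩ h
  have key : ∀ u v, (u ∈ U ∧ v ∈ V) ↔ (u ∈ U' ∧ v ∈ V') := by
    intro u v
    rw [← mem_map_sup_map, ← mem_map_sup_map]
    exact iff_of_eq (congrArg (incl u + incl' v ∈ ·) h)
  ext u
  · simpa using key u 0
  · simpa using key 0 u

lemma span_join (u v : Fin 2 → ℂ) :
    Submodule.span ℂ {incl u, incl' v} =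
      (Submodule.span ℂ {u}).map incl ⊔ (Submodule.span ℂ {v}).map incl' := by
  rw [Submodule.map_span, Submodule.map_span, Set.image_singleton, Set.image_singleton,
    ← Submodule.span_union, Set.singleton_union]

lemma vec_ne_zero {a b : ℂ} : ((a, b) ≠ (0, 0)) ↔ (![a, b] : Fin 2 → ℂ) ≠ 0 := by
  simp

lemma mem_joiningLines {φ ψ : MvPolynomial (Fin 2) ℂ} {W : Submodule ℂ (Fin 4 → ℂ)} :
    W ∈ joiningLines φ ψ ↔ ∃ u v : Fin 2 → ℂ, u ≠ 0 ∧ v ≠ 0 ∧ eval u φ = 0 ∧ eval v ψ = 0 ∧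
      W = Submodule.span ℂ {incl u, incl' v} := by
  constructor
  · rintro ⟨a, b, c, e, hab, hce, h1, h2, rfl⟩
    exact ⟨![a, b], ![c, e], vec_ne_zero.1 hab, vec_ne_zero.1 hce, h1, h2, rfl⟩
  · rintro ⟨u, v, hu, hv, h1, h2, rfl⟩
    have hu' : u = ![u 0, u 1] := by ext i; fin_cases i <;> rfl
    have hv' : v = ![v 0, v 1] := by ext i; fin_cases i <;> rfl
    refine ⟨u 0, u 1, v 0, v 1, vec_ne_zero.2 (hu' ▸ hu), vec_ne_zero.2 (hv' ▸ hv), hu' ▸ h1,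
      hv' ▸ h2, rfl⟩

lemma joiningLines_eq_image (φ ψ : MvPolynomial (Fin 2) ℂ) :
    joiningLines φ ψ =
      (fun UV : Submodule ℂ (Fin 2 → ℂ) × Submodule ℂ (Fin 2 → ℂ) =>
        UV.1.map incl ⊔ UV.2.map incl') '' (projZeros φ ×ˢ projZeros ψ) := by
  ext W
  rw [mem_joiningLines]
  constructor
  · rintro ⟨u, v, hu, hv, h1, h2, rfl⟩
    exact ⟨(_, _), ⟨⟨u, hu, h1, rfl⟩, ⟨v, hv, h2, rfl⟩⟩, (span_join u v).symm⟩
  · rintro ⟨⟨_, _⟩, ⟨⟨u, hu, h1, rfl⟩, ⟨v, hv, h2, rfl⟩⟩, rfl⟩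
    exact ⟨u, v, hu, hv, h1, h2, (span_join u v).symm⟩

/-! ### Lines on the surface -/

lemma eval_sepForm (φ ψ : MvPolynomial (Fin 2) ℂ) (u v : Fin 2 → ℂ) :
    eval (incl u + incl' v) (sepForm φ ψ) = eval u φ - eval v ψ := by
  have h1 : (incl u + incl' v) ∘ (fun i : Fin 2 => (⟨i.val, by omega⟩ : Fin 4)) = u := by
    ext i; fin_cases i <;> simp [incl, incl']
  have h2 : (incl u + incl' v) ∘ (fun i : Fin 2 => (⟨i.val + 2, by omega⟩ : Fin 4)) = v := by
    ext i; fin_cases i <;> simp [incl, incl']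
  rw [sepForm, map_sub, eval_rename, eval_rename, h1, h2]

lemma eval_smul_of_isHomogeneous {d : ℕ} {φ : MvPolynomial (Fin 2) ℂ} (hφ : φ.IsHomogeneous d)
    (c : ℂ) (v : Fin 2 → ℂ) : eval (c • v) φ = c ^ d * eval v φ := by
  rw [eval_eq, eval_eq, Finset.mul_sum]
  refine Finset.sum_congr rfl fun m hm => ?_
  have hm' : m.weight 1 = d := hφ (by simpa using hm)
  have : ∏ i ∈ m.support, c ^ m i = c ^ d := by
    rw [Finset.prod_pow_eq_pow_sum, ← hm', Finsupp.weight_apply]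
    simp [Finsupp.sum]
  simp only [Pi.smul_apply, smul_eq_mul, mul_pow, Finset.prod_mul_distrib, this]
  ring

lemma linearIndependent_join {u v : Fin 2 → ℂ} (hu : u ≠ 0) (hv : v ≠ 0) :
    LinearIndependent ℂ ![incl u, incl' v] := by
  rw [LinearIndependent.pair_iff]
  intro s t h
  have h' : incl (s • u) + incl' (t • v) = incl 0 + incl' 0 := by simpa using h
  obtain ⟨h1, h2⟩ := incl_add_incl'_inj h'
  exact ⟨(smul_eq_zero.1 h1).resolve_right hu, (smul_eq_zero.1 h2).resolve_right hv⟩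

lemma isLine_join {u v : Fin 2 → ℂ} (hu : u ≠ 0) (hv : v ≠ 0) :
    IsLine (Submodule.span ℂ {incl u, incl' v}) := by
  have := finrank_span_eq_card (linearIndependent_join hu hv)
  rw [Matrix.range_cons_cons_empty] at this
  simpa [IsLine] using this

lemma lineL_eq : lineL = LinearMap.range incl := by
  apply le_antisymm
  · rw [lineL, Submodule.span_le]
    rintro x (rfl | rfl)
    · exact ⟨![1, 0], rfl⟩
    · exact ⟨![0, 1], rfl⟩
  · rintro _ ⟨u, rfl⟩
    rw [lineL, Submodule.mem_span_pair]
    refine ⟨u 0, u 1, ?_⟩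
    ext i; fin_cases i <;> simp [incl]

lemma lineL'_eq : lineL' = LinearMap.range incl' := by
  apply le_antisymm
  · rw [lineL', Submodule.span_le]
    rintro x (rfl | rfl)
    · exact ⟨![1, 0], rfl⟩
    · exact ⟨![0, 1], rfl⟩
  · rintro _ ⟨u, rfl⟩
    rw [lineL', Submodule.mem_span_pair]
    refine ⟨u 0, u 1, ?_⟩
    ext i; fin_cases i <;> simp [incl']

lemma meets_iff {W : Submodule ℂ (Fin 4 → ℂ)} {f : (Fin 2 → ℂ) →ₗ[ℂ] (Fin 4 → ℂ)}
    (hf : Function.Injective f) :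
    W ⊓ LinearMap.range f ≠ ⊥ ↔ ∃ u, u ≠ 0 ∧ f u ∈ W := by
  rw [Submodule.ne_bot_iff]
  constructor
  · rintro ⟨_, ⟨hW, u, rfl⟩, h⟩
    exact ⟨u, fun h0 => h (by simp [h0]), hW⟩
  · rintro ⟨u, hu, hW⟩
    exact ⟨f u, ⟨hW, u, rfl⟩, fun h => hu (hf (by simpa using h))⟩

lemma incl_injective : Function.Injective incl := fun u v h =>
  (incl_add_incl'_inj (v := 0) (v' := 0) (by simpa using h)).1

lemma incl'_injective : Function.Injective incl' := fun u v h =>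
  (incl_add_incl'_inj (u := 0) (u' := 0) (by simpa using h)).2

/-- For squarefree binary forms `φ, ψ` of degree `d ≥ 3`, every line joining a zero of
`φ` on `L` to a zero of `ψ` on `L'` lies on the surface `φ(x,y) - ψ(z,t) = 0`; these
joining lines are exactly `d²` in number, and they are precisely the lines lying on the
surface which meet both `L` and `L'` nontrivially. -/
theorem joining_lines_on_sepForm (d : ℕ) (hd : 3 ≤ d)
    (φ ψ : MvPolynomial (Fin 2) ℂ)
    (hφ : φ.IsHomogeneous d) (hψ : ψ.IsHomogeneous d)
    (hφsq : Squarefree φ) (hψsq : Squarefree ψ) :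
    (∀ W ∈ joiningLines φ ψ, IsLine W ∧ LiesOn (sepForm φ ψ) W) ∧
    (joiningLines φ ψ).ncard = d ^ 2 ∧
    joiningLines φ ψ =
      {W | IsLine W ∧ LiesOn (sepForm φ ψ) W ∧ W ⊓ lineL ≠ ⊥ ∧ W ⊓ lineL' ≠ ⊥} := by
  have hd0 : d ≠ 0 := by omega
  have hon : ∀ W ∈ joiningLines φ ψ, IsLine W ∧ LiesOn (sepForm φ ψ) W := by
    intro W hW
    obtain ⟨u, v, hu, hv, h1, h2, rfl⟩ := mem_joiningLines.1 hW
    refine ⟨isLine_join hu hv, fun w hw => ?_⟩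
    obtain ⟨s, t, rfl⟩ := Submodule.mem_span_pair.1 hw
    rw [← map_smul, ← map_smul, eval_sepForm, eval_smul_of_isHomogeneous hφ,
      eval_smul_of_isHomogeneous hψ, h1, h2]
    simp
  refine ⟨hon, ?_, ?_⟩
  · rw [joiningLines_eq_image, Set.ncard_image_of_injective _ join_injective, Set.ncard_prod,
      ncard_projZeros hφ hφsq, ncard_projZeros hψ hψsq, pow_two]
  · ext W
    rw [Set.mem_ofPred_eq, lineL_eq, lineL'_eq, meets_iff incl_injective,
      meets_iff incl'_injective]
    constructor
    · intro hW
      refine ⟨(hon W hW).1, (hon W hW).2, ?_⟩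
      obtain ⟨u, v, hu, hv, -, -, rfl⟩ := mem_joiningLines.1 hW
      exact ⟨⟨u, hu, Submodule.subset_span (by simp)⟩, ⟨v, hv, Submodule.subset_span (by simp)⟩⟩
    · rintro ⟨hW, hS, ⟨u, hu, huW⟩, ⟨v, hv, hvW⟩⟩
      have hφ0 : eval 0 φ = 0 := by
        simpa [hd0] using eval_smul_of_isHomogeneous hφ 0 0
      have hψ0 : eval 0 ψ = 0 := by
        simpa [hd0] using eval_smul_of_isHomogeneous hψ 0 0
      have h1 := hS _ huW
      have h2 := hS _ hvW
      rw [← add_zero (incl u), ← map_zero incl', eval_sepForm, hψ0, sub_zero] at h1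
      rw [← zero_add (incl' v), ← map_zero incl, eval_sepForm, hφ0, zero_sub, neg_eq_zero] at h2
      refine mem_joiningLines.2 ⟨u, v, hu, hv, h1, h2, ?_⟩
      -- The joining line is contained in `W` and both have dimension two.
      symm
      apply Submodule.eq_of_le_of_finrank_eq
      · rw [Submodule.span_le]
        rintro x (rfl | rfl)
        · exact huW
        · exact hvW
      · exact (isLine_join hu hv).trans hW.symm
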